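/- Fix the number of agents n ≥ 1 and consider the FI model with the Borda scoring vector s_i = m - i + 1. For m items and a vector k of nonnegative integers summing to m, let EU^k(a) denote the expected utility of agent a under the non-interleaving picking sequence k, and let K*_m be the set of vectors k maximizing min_a EU^k(a). Then for every ε > 0 there exists M such that for all m ≥ M there EXISTS k ∈ K*_m with ( max_a EU^k(a) - min_a EU^k(a) ) / ( Σ_a EU^k(a) ) < ε. -/

import Mathlib

/-- The `k` most preferred items of `S` under the ranking `σ` (where `σ r` is the item of
0-based rank `r`, so `σ.symm x` is the rank of item `x`): the items of `S` having fewer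
than `k` strictly better items inside `S`. -/
def topk {m : ℕ} (σ : Fin m ≃ Fin m) (S : Finset (Fin m)) (k : ℕ) : Finset (Fin m) :=
  S.filter fun x => (S.filter fun y => σ.symm y < σ.symm x).card < k

/-- Items remaining before the `i`-th agent (0-based) picks, under profile `P` (agent `i`
has ranking `P i`) and pick-count vector `k` (agent `i` picks `k i` items). -/
def remaining {m : ℕ} (P : ℕ → Fin m ≃ Fin m) (k : ℕ → ℕ) : ℕ → Finset (Fin m)
  | 0 => Finset.univ
  | i + 1 => remaining P k i \ topk (P i) (remaining P k i) (k i)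

/-- The set of items greedily picked by the `i`-th agent (0-based). -/
def alloc {m : ℕ} (P : ℕ → Fin m ≃ Fin m) (k : ℕ → ℕ) (i : ℕ) : Finset (Fin m) :=
  topk (P i) (remaining P k i) (k i)

/-- The utility of the `i`-th agent (0-based): the sum of the scores `s r` over the
1-based ranks `r` (in her own ranking) of the items she receives. -/
noncomputable def util {m : ℕ} (s : ℕ → ℝ) (P : ℕ → Fin m ≃ Fin m) (k : ℕ → ℕ)
    (i : ℕ) : ℝ :=
  ∑ x ∈ alloc P k i, s (((P i).symm x : ℕ) + 1)

/-- Extend a profile on `Fin n` to a profile indexed by `ℕ` (agents `≥ n` are irrelevant). -/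
def extendProfile {m : ℕ} (n : ℕ) (Q : Fin n → Fin m ≃ Fin m) : ℕ → Fin m ≃ Fin m :=
  fun i => if h : i < n then Q ⟨i, h⟩ else Equiv.refl _

/-- Expected utility of the `i`-th agent (0-based) in the full independence model. -/
noncomputable def EUFI (n m : ℕ) (s : ℕ → ℝ) (k : ℕ → ℕ) (i : ℕ) : ℝ :=
  (∑ Q : Fin n → Fin m ≃ Fin m, util s (extendProfile n Q) k i) /
    (Fintype.card (Fin n → Fin m ≃ Fin m) : ℝ)

/-- The Borda scoring vector for `m` items: `s_j = m - j + 1`. -/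
noncomputable def bordaScore (m : ℕ) : ℕ → ℝ := fun j => ((m + 1 - j : ℕ) : ℝ)

section BordaPicking

open Finset

/-- Expected Borda utility, divided by `m + 1`, of an agent who picks `k` out of `r` remaining
items. -/
noncomputable def bordaShare (k r : ℝ) : ℝ := k * (2 * r + 1 - k) / (2 * (r + 1))

section Counting

variable {m : ℕ}

/-- The positions of the elements of `T` inside `T` run exactly once through `0, …, #T - 1`. -/
lemma sum_position {M : Type*} [AddCommMonoid M] (σ : Fin m ≃ Fin m) (T : Finset (Fin m))
    (φ : ℕ → M) :
    ∑ z ∈ T, φ (#{y ∈ T | σ.symm y < σ.symm z}) = ∑ p ∈ range #T, φ p := by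
  have hlt : ∀ a ∈ T, ∀ b, σ.symm a < σ.symm b →
      #{y ∈ T | σ.symm y < σ.symm a} < #{y ∈ T | σ.symm y < σ.symm b} := by
    intro a ha b hab
    apply card_lt_card
    refine (ssubset_iff_of_subset ?_).2 ⟨a, by simp [ha, hab], by simp⟩
    intro y hy
    simp only [mem_filter] at hy ⊢
    exact ⟨hy.1, hy.2.trans hab⟩
  have hinj : Set.InjOn (fun z => #{y ∈ T | σ.symm y < σ.symm z}) T := by
    intro a ha b hb hab
    rcases lt_trichotomy (σ.symm a) (σ.symm b) with h | h | h
    · exact absurd hab (hlt a ha b h).ne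
    · exact σ.symm.injective h
    · exact absurd hab (hlt b hb a h).ne'
  have himg : T.image (fun z => #{y ∈ T | σ.symm y < σ.symm z}) = range #T := by
    apply eq_of_subset_of_card_le
    · intro p hp
      obtain ⟨z, hz, rfl⟩ := mem_image.1 hp
      rw [mem_range]
      exact card_lt_card ((filter_ssubset).2 ⟨z, hz, by simp⟩)
    · rw [card_image_of_injOn hinj, card_range]
  rw [← himg, sum_image hinj]

lemma card_topk (σ : Fin m ≃ Fin m) (S : Finset (Fin m)) (k : ℕ) :
    #(topk σ S k) = min k #S := by
  rw [topk, card_filter, sum_position σ S (fun p => if p < k then 1 else 0), ← card_filter]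
  have : {p ∈ range #S | p < k} = range (min k #S) := by
    ext p; simp [and_comm]
  rw [this, card_range]

/-- The number of picked items at least as good as `z`. -/
lemma card_topk_filter_le (σ : Fin m ≃ Fin m) (S : Finset (Fin m)) (k : ℕ) (z : Fin m) :
    #{x ∈ topk σ S k | σ.symm x ≤ σ.symm z} = min k #{y ∈ S | σ.symm y ≤ σ.symm z} := by
  rw [← card_topk σ]
  congr 1
  ext x
  simp only [topk, mem_filter]
  have : σ.symm x ≤ σ.symm z →
      {y ∈ {y ∈ S | σ.symm y ≤ σ.symm z} | σ.symm y < σ.symm x} =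
        {y ∈ S | σ.symm y < σ.symm x} := by
    intro hx
    ext y
    simp only [mem_filter]
    exact ⟨fun h => ⟨h.1.1, h.2⟩, fun h => ⟨⟨h.1, (h.2.trans_le hx).le⟩, h.2⟩⟩
  constructor
  · rintro ⟨⟨h1, h2⟩, h3⟩
    exact ⟨⟨h1, h3⟩, by rwa [this h3]⟩
  · rintro ⟨⟨h1, h3⟩, h2⟩
    rw [this h3] at h2
    exact ⟨⟨h1, h2⟩, h3⟩

/-- The Borda score of `x` counts the items not better than `x`; sum over the picked items. -/
lemma sum_bordaScore_topk (σ : Fin m ≃ Fin m) (S : Finset (Fin m)) (k : ℕ) :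
    ∑ x ∈ topk σ S k, bordaScore m ((σ.symm x : ℕ) + 1) =
      ∑ z, ((min k #{y ∈ S | σ.symm y ≤ σ.symm z} : ℕ) : ℝ) := by
  have hscore : ∀ x, bordaScore m ((σ.symm x : ℕ) + 1) =
      ∑ z, if σ.symm x ≤ σ.symm z then (1 : ℝ) else 0 := by
    intro x
    rw [Equiv.sum_comp σ.symm (fun z => if σ.symm x ≤ z then (1 : ℝ) else 0), sum_boole,
      Finset.filter_le_eq_Ici, Fin.card_Ici, bordaScore]
    congr 1
    omega
  simp_rw [hscore]
  rw [sum_comm]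
  refine sum_congr rfl fun z _ => ?_
  rw [sum_boole, card_topk_filter_le]

lemma sum_range_min (k R : ℕ) (h : k ≤ R) :
    ∑ p ∈ range (R + 1), ((min k p : ℕ) : ℝ) = k * (2 * R + 1 - k) / 2 := by
  induction R, h using Nat.le_induction with
  | base =>
    rw [sum_congr rfl fun p hp => by
      rw [min_eq_right (Nat.lt_succ_iff.1 (mem_range.1 hp))]]
    induction k with
    | zero => simp
    | succ k ih => rw [sum_range_succ, ih]; push_cast; ring
  | succ R hR ih =>
    rw [sum_range_succ, ih, min_eq_left (by omega)]; push_cast; ring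

lemma sum_min_position_mem (σ : Fin m ≃ Fin m) (S : Finset (Fin m)) (k : ℕ) (hk : k ≤ #S) :
    ∑ z ∈ S, ((min k #{y ∈ S | σ.symm y ≤ σ.symm z} : ℕ) : ℝ) =
      k * (2 * #S + 1 - k) / 2 := by
  have : ∀ z ∈ S, #{y ∈ S | σ.symm y ≤ σ.symm z} = #{y ∈ S | σ.symm y < σ.symm z} + 1 := by
    intro z hz
    have : {y ∈ S | σ.symm y ≤ σ.symm z} = insert z {y ∈ S | σ.symm y < σ.symm z} := by
      ext y
      simp only [mem_filter, mem_insert, le_iff_lt_or_eq, σ.symm.injective.eq_iff]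
      constructor
      · rintro ⟨h, h' | h'⟩
        · exact Or.inr ⟨h, h'⟩
        · exact Or.inl h'
      · rintro (rfl | h)
        · exact ⟨hz, Or.inr rfl⟩
        · exact ⟨h.1, Or.inl h.2⟩
    rw [this, card_insert_of_notMem (by simp)]
  rw [sum_congr rfl fun z hz => by rw [this z hz],
    sum_position σ S (fun p => ((min k (p + 1) : ℕ) : ℝ)), ← sum_range_min k #S hk,
    sum_range_succ']
  simp

/-- By symmetry, all elements of `T` have the same position distribution inside `T`. -/
lemma sum_perm_position (T : Finset (Fin m)) (φ : ℕ → ℝ) {z : Fin m} (hz : z ∈ T) :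
    (#T : ℝ) * ∑ σ : Fin m ≃ Fin m, φ (#{y ∈ T | σ.symm y < σ.symm z}) =
      (m.factorial : ℝ) * ∑ p ∈ range #T, φ p := by
  have hsymm : ∀ w ∈ T, ∑ σ : Fin m ≃ Fin m, φ (#{y ∈ T | σ.symm y < σ.symm w}) =
      ∑ σ : Fin m ≃ Fin m, φ (#{y ∈ T | σ.symm y < σ.symm z}) := by
    intro w hw
    refine Fintype.sum_equiv (Equiv.mulLeft (Equiv.swap w z)) _ _ fun σ => ?_
    congr 1
    have hT : ∀ y, Equiv.swap w z y ∈ T ↔ y ∈ T := by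
      intro y
      rw [Equiv.swap_apply_def]
      split_ifs with h1 h2
      · simp [h1, hw, hz]
      · simp [h2, hw, hz]
      · rfl
    refine card_bij (fun y _ => Equiv.swap w z y) ?_ ?_ ?_
    · intro y hy
      simp only [mem_filter, hT] at hy ⊢
      simpa [Equiv.Perm.mul_def, Equiv.symm_trans_apply] using hy
    · intro a _ b _ h
      exact (Equiv.swap w z).injective h
    · intro y hy
      refine ⟨Equiv.swap w z y, ?_, by simp⟩
      simp only [mem_filter, hT] at hy ⊢
      simpa [Equiv.Perm.mul_def, Equiv.symm_trans_apply] using hy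
  calc (#T : ℝ) * ∑ σ : Fin m ≃ Fin m, φ (#{y ∈ T | σ.symm y < σ.symm z})
      = ∑ w ∈ T, ∑ σ : Fin m ≃ Fin m, φ (#{y ∈ T | σ.symm y < σ.symm w}) := by
        rw [sum_congr rfl hsymm, sum_const, nsmul_eq_mul]
    _ = ∑ σ : Fin m ≃ Fin m, ∑ p ∈ range #T, φ p := by
        rw [sum_comm]
        exact sum_congr rfl fun σ _ => sum_position σ T φ
    _ = _ := by
        rw [sum_const, nsmul_eq_mul, card_univ, Fintype.card_perm, Fintype.card_fin]

lemma sum_perm_min_position_notMem (S : Finset (Fin m)) (k : ℕ) (hk : k ≤ #S) {z : Fin m}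
    (hz : z ∉ S) :
    ∑ σ : Fin m ≃ Fin m, ((min k #{y ∈ S | σ.symm y ≤ σ.symm z} : ℕ) : ℝ) =
      (m.factorial : ℝ) * bordaShare k #S := by
  have h := sum_perm_position (insert z S) (fun p => ((min k p : ℕ) : ℝ)) (mem_insert_self z S)
  rw [card_insert_of_notMem hz, sum_range_min k _ hk] at h
  have heq : ∀ σ : Fin m ≃ Fin m, {y ∈ insert z S | σ.symm y < σ.symm z} =
      {y ∈ S | σ.symm y ≤ σ.symm z} := by
    intro σ
    ext y
    simp only [mem_filter, mem_insert, le_iff_lt_or_eq, σ.symm.injective.eq_iff]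
    constructor
    · rintro ⟨rfl | h, h'⟩
      · exact absurd h' (lt_irrefl _)
      · exact ⟨h, Or.inl h'⟩
    · rintro ⟨hy, h' | rfl⟩
      · exact ⟨Or.inr hy, h'⟩
      · exact absurd hy hz
  simp_rw [heq] at h
  push_cast at h ⊢
  rw [bordaShare]
  have : (#S : ℝ) + 1 ≠ 0 := by positivity
  field_simp
  linarith

/-- Total Borda utility, over all rankings, of picking the best `k` items of `S`. -/
lemma sum_perm_bordaScore_topk (S : Finset (Fin m)) (k : ℕ) (hk : k ≤ #S) :
    ∑ σ : Fin m ≃ Fin m, ∑ x ∈ topk σ S k, bordaScore m ((σ.symm x : ℕ) + 1) =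
      (m.factorial : ℝ) * ((m + 1) * bordaShare k #S) := by
  simp_rw [sum_bordaScore_topk]
  rw [sum_congr rfl fun σ _ => (sum_add_sum_compl S _).symm, sum_add_distrib,
    sum_congr rfl fun σ _ => sum_min_position_mem σ S k hk]
  rw [sum_comm (t := Sᶜ), sum_congr rfl fun z hz =>
    sum_perm_min_position_notMem S k hk (mem_compl.1 hz)]
  simp only [sum_const, nsmul_eq_mul, card_univ, Fintype.card_perm, Fintype.card_fin, card_compl]
  have hS : #S ≤ m := by simpa using card_le_univ S
  rw [Nat.cast_sub hS, bordaShare]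
  have : (#S : ℝ) + 1 ≠ 0 := by positivity
  field_simp
  ring

lemma card_remaining (P : ℕ → Fin m ≃ Fin m) (k : ℕ → ℕ) (i : ℕ) :
    #(remaining P k i) = m - ∑ j ∈ range i, k j := by
  induction i with
  | zero => simp [remaining]
  | succ i ih =>
    rw [remaining, card_sdiff_of_subset (show topk _ _ _ ⊆ _ from filter_subset _ _),
      card_topk, ih, sum_range_succ]
    omega

lemma remaining_congr {P P' : ℕ → Fin m ≃ Fin m} (k : ℕ → ℕ) (i : ℕ)
    (h : ∀ j < i, P j = P' j) : remaining P k i = remaining P' k i := by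
  induction i with
  | zero => rfl
  | succ i ih =>
    rw [remaining, remaining, ih fun j hj => h j (hj.trans i.lt_succ_self), h i i.lt_succ_self]

/-- The expected Borda utility in the full independence model. -/
theorem EUFI_bordaScore {n : ℕ} (k : ℕ → ℕ) (hk : ∑ j ∈ range n, k j = m) {i : ℕ} (hi : i < n) :
    EUFI n m (bordaScore m) k i =
      (m + 1) * bordaShare (k i) ((m : ℝ) - ∑ j ∈ range i, (k j : ℝ)) := by
  have hle : ∑ j ∈ range i, k j + k i ≤ m := by
    rw [← sum_range_succ, ← hk]
    exact sum_le_sum_of_subset (range_mono hi)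
  set R := m - ∑ j ∈ range i, k j with hR
  have hRr : (R : ℝ) = (m : ℝ) - ∑ j ∈ range i, (k j : ℝ) := by
    rw [hR, Nat.cast_sub (by omega)]; push_cast; rfl
  rw [← hRr, EUFI, div_eq_iff (by positivity)]
  let e := Equiv.funSplitAt (⟨i, hi⟩ : Fin n) (Fin m ≃ Fin m)
  have hcard : (Fintype.card (Fin n → Fin m ≃ Fin m) : ℝ) =
      m.factorial * Fintype.card ({j : Fin n // j ≠ ⟨i, hi⟩} → Fin m ≃ Fin m) := by
    rw [Fintype.card_congr e, Fintype.card_prod, Fintype.card_perm, Fintype.card_fin]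
    push_cast; rfl
  rw [← e.symm.sum_comp, Fintype.sum_prod_type_right]
  have key : ∀ Q' : {j : Fin n // j ≠ ⟨i, hi⟩} → Fin m ≃ Fin m,
      ∑ σ : Fin m ≃ Fin m, util (bordaScore m) (extendProfile n (e.symm (σ, Q'))) k i =
        (m.factorial : ℝ) * ((m + 1) * bordaShare (k i) R) := by
    intro Q'
    set S := remaining (extendProfile n (e.symm (Equiv.refl _, Q'))) k i with hS
    have hSc : #S = R := card_remaining _ _ _
    rw [← hSc, ← sum_perm_bordaScore_topk S (k i) (by omega)]
    refine sum_congr rfl fun σ _ => ?_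
    have hself : extendProfile n (e.symm (σ, Q')) i = σ := by
      simp [extendProfile, hi, e, Equiv.funSplitAt, Equiv.piSplitAt]
    have hrem : remaining (extendProfile n (e.symm (σ, Q'))) k i = S := by
      rw [hS]
      refine remaining_congr k i fun j hj => ?_
      simp [extendProfile, hj.trans hi, e, Equiv.funSplitAt, Equiv.piSplitAt, hj.ne]
    rw [util, alloc, hself, hrem]
  rw [sum_congr rfl fun Q' _ => key Q', sum_const, nsmul_eq_mul, card_univ, hcard]
  ring

end Counting

section Share

lemma half_le_bordaShare {k r : ℝ} (hk : 0 ≤ k) (hkr : k ≤ r) : k / 2 ≤ bordaShare k r := by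
  have hr : 0 < r + 1 := by linarith
  rw [bordaShare, div_le_div_iff₀ two_pos (by positivity)]
  nlinarith

lemma bordaShare_self {r : ℝ} (hr : 0 ≤ r) : bordaShare r r = r / 2 := by
  have hr' : r + 1 ≠ 0 := by positivity
  rw [bordaShare]
  field_simp
  ring

lemma bordaShare_eq {k r : ℝ} (hr : 0 ≤ r) :
    bordaShare k r = k - k * (k + 1) / (2 * (r + 1)) := by
  have hr' : r + 1 ≠ 0 := by positivity
  rw [bordaShare]
  field_simp
  ring

lemma bordaShare_mono_right {k r r' : ℝ} (hk : 0 ≤ k) (hr : 0 ≤ r) (h : r ≤ r') :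
    bordaShare k r ≤ bordaShare k r' := by
  rw [bordaShare_eq hr, bordaShare_eq (hr.trans h)]
  gcongr

lemma bordaShare_le_sub_one_add {k r : ℝ} (hk : 0 ≤ k) (hr : 0 ≤ r) :
    bordaShare k r ≤ bordaShare (k - 1) r + 1 := by
  have hr' : 0 < r + 1 := by positivity
  have : bordaShare (k - 1) r + 1 - bordaShare k r = k / (r + 1) := by
    rw [bordaShare, bordaShare]
    field_simp
    ring
  have : 0 ≤ k / (r + 1) := by positivity
  linarith

/-- Picking `d` more items out of `D` fewer ones: the gain is at least `δ` per item, the loss at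
most one half per item. -/
lemma bordaShare_add_sub {k r d D δ : ℝ} (hk : 0 ≤ k) (hd : 0 ≤ d) (hD : 0 ≤ D)
    (h : δ * (r - D + 1) ≤ r - D - k - d) (hkr : k + d + D ≤ r) :
    bordaShare k r + δ * d - D / 2 ≤ bordaShare (k + d) (r - D) := by
  obtain ⟨s, rfl⟩ : ∃ s, r = s + D := ⟨r - D, by ring⟩
  simp only [add_sub_cancel_right] at *
  have hs : 0 ≤ s := by linarith
  have hs' : 0 < s + 1 := by positivity
  have hsD : 0 < s + D + 1 := by positivity
  have hgain : bordaShare (k + d) s - bordaShare k s =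
      d * ((2 * s + 1 - 2 * k - d) / (2 * (s + 1))) := by
    rw [bordaShare, bordaShare]
    field_simp
    ring
  have hgain' : δ ≤ (2 * s + 1 - 2 * k - d) / (2 * (s + 1)) := by
    rw [le_div_iff₀ (by positivity)]
    linarith
  have hloss : bordaShare k (s + D) - bordaShare k s =
      D / 2 * (k * (k + 1) / ((s + 1) * (s + D + 1))) := by
    rw [bordaShare, bordaShare]
    field_simp
    ring
  have hloss' : k * (k + 1) / ((s + 1) * (s + D + 1)) ≤ 1 := by
    rw [div_le_one (by positivity)]
    apply mul_le_mul <;> linarith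
  have h1 := mul_le_mul_of_nonneg_left hgain' hd
  have h2 := mul_le_mul_of_nonneg_left hloss' (show 0 ≤ D / 2 by positivity)
  linarith

end Share

section Optimization

/-- Expected Borda utility, divided by `m + 1`, of agent `i` under the picking vector `k`. -/
noncomputable def pickShare (m : ℕ) (k : ℕ → ℕ) (i : ℕ) : ℝ :=
  bordaShare (k i) ((m : ℝ) - ∑ j ∈ range i, (k j : ℝ))

variable {N m : ℕ} {k : ℕ → ℕ}

lemma sum_range_add_le (hk : ∑ j ∈ range (N + 1), k j = m) {i : ℕ} (hi : i ≤ N) :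
    ∑ j ∈ range i, (k j : ℝ) + k i ≤ m := by
  rw [← sum_range_succ, ← hk]
  push_cast
  exact sum_le_sum_of_subset_of_nonneg (range_mono (by omega)) fun _ _ _ => by positivity

lemma half_le_pickShare (hk : ∑ j ∈ range (N + 1), k j = m) {i : ℕ} (hi : i ≤ N) :
    (k i : ℝ) / 2 ≤ pickShare m k i :=
  half_le_bordaShare (by positivity) (by linarith [sum_range_add_le hk hi])

lemma pickShare_last (hk : ∑ j ∈ range (N + 1), k j = m) : pickShare m k N = k N / 2 := by
  have : (m : ℝ) - ∑ j ∈ range N, (k j : ℝ) = k N := by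
    rw [← hk, sum_range_succ]; push_cast; ring
  rw [pickShare, this, bordaShare_self (by positivity)]

/-- The equal split guarantees a linear share to everybody. -/
lemma exists_pickShare_ge (N m : ℕ) : ∃ k : ℕ → ℕ, ∑ j ∈ range (N + 1), k j = m ∧
    ∀ i ≤ N, ((m : ℝ) / (N + 1) - 1) / 2 ≤ pickShare m k i := by
  set q := m / (N + 1) with hq
  have hqm : N * q + q ≤ m := by
    have := Nat.mul_div_le m (N + 1)
    rw [← hq] at this
    linarith
  have hsum : ∑ j ∈ range (N + 1), (if j < N then q else m - N * q) = m := by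
    rw [sum_range_succ, sum_congr rfl fun j hj => if_pos (mem_range.1 hj)]
    simp only [sum_const, card_range, smul_eq_mul, lt_irrefl, if_false]
    exact Nat.add_sub_of_le (le_of_add_le_left hqm)
  refine ⟨fun j => if j < N then q else m - N * q, hsum, fun i hi => ?_⟩
  refine le_trans ?_ (half_le_pickShare hsum hi)
  have hqi : q ≤ if i < N then q else m - N * q := by split_ifs <;> omega
  have hqi' : (q : ℝ) ≤ ((if i < N then q else m - N * q : ℕ) : ℝ) := by exact_mod_cast hqi
  have hlt : (m : ℝ) / (N + 1) < q + 1 := by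
    rw [div_lt_iff₀ (by positivity)]
    have := Nat.lt_mul_div_succ m (Nat.succ_pos N)
    have : m < (q + 1) * (N + 1) := by rw [hq, mul_comm]; exact this
    exact_mod_cast this
  linarith

/-- If agent `i` is more than one unit above `v`, she can pass an item to the last agent. -/
lemma exists_transfer_to_last (hk : ∑ j ∈ range (N + 1), k j = m) {v : ℝ} (hv0 : 0 ≤ v)
    (hv : ∀ j ≤ N, v ≤ pickShare m k j) {i : ℕ} (hi : i < N) (h : v + 1 < pickShare m k i) :
    ∃ k' : ℕ → ℕ, ∑ j ∈ range (N + 1), k' j = m ∧ (∀ j ≤ N, v ≤ pickShare m k' j) ∧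
      k N < k' N := by
  have hki : 1 ≤ k i := by
    by_contra hcon
    have h0 : k i = 0 := by omega
    simp [pickShare, h0, bordaShare] at h
    linarith
  set k' : ℕ → ℕ := fun j => if j = i then k i - 1 else if j = N then k N + 1 else k j with hk'
  have hpart : ∀ j ≤ N, ∑ l ∈ range j, (k' l : ℝ) =
      ∑ l ∈ range j, (k l : ℝ) - if i < j then 1 else 0 := by
    intro j
    induction j with
    | zero => simp
    | succ j ih =>
      intro hj
      rw [sum_range_succ, sum_range_succ, ih (by omega)]
      have hjN : j ≠ N := by omega
      rcases lt_trichotomy i j with hij | rfl | hij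
      · simp [hk', hij, hij.ne', hjN, Nat.lt_succ_of_lt hij]; ring
      · simp [hk', Nat.cast_sub hki]; ring
      · simp [hk', hij.ne, hjN, hij.not_gt, (show ¬ i < j + 1 by omega)]
  have hN : k' N = k N + 1 := by simp [hk', hi.ne']
  have hsum : ∑ j ∈ range (N + 1), k' j = m := by
    have : (∑ j ∈ range (N + 1), (k' j : ℝ)) = m := by
      rw [sum_range_succ, hpart N le_rfl, hN, ← hk, sum_range_succ]
      simp [hi]
    exact_mod_cast this
  refine ⟨k', hsum, fun j hj => ?_, by omega⟩
  have hr := sum_range_add_le hk hj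
  have hkj : (0 : ℝ) ≤ k j := by positivity
  rcases eq_or_lt_of_le hj with rfl | hjN
  · have := hv j le_rfl
    rw [pickShare_last hk] at this
    rw [pickShare_last hsum, hN]
    push_cast
    linarith
  rcases eq_or_ne j i with rfl | hji
  · have hkk : (k' j : ℝ) = k j - 1 := by simp [hk', Nat.cast_sub hki]
    have := bordaShare_le_sub_one_add (k := k j) (r := (m : ℝ) - ∑ l ∈ range j, (k l : ℝ)) hkj
      (by linarith)
    rw [pickShare, hpart j hj, hkk]
    simp only [lt_irrefl, if_false, sub_zero]
    rw [pickShare] at h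
    linarith
  · have hkk : k' j = k j := by simp [hk', hji, hjN.ne]
    refine (hv j hj).trans ?_
    rw [pickShare, pickShare, hpart j hj, hkk]
    refine bordaShare_mono_right hkj (by linarith) ?_
    split_ifs <;> linarith

/-- If the last agent is far above `v`, everybody can be lifted strictly above `v`, agent `i`
receiving `(2 * N + 3) ^ i` additional items. -/
lemma exists_lift (hk : ∑ j ∈ range (N + 1), k j = m) {v : ℝ}
    (hv : ∀ j ≤ N, v ≤ pickShare m k j)
    (hv0 : ((m : ℝ) / (N + 1) - 1) / 2 ≤ v)
    (hm : 2 * ((N : ℝ) + 1) * (1 + ∑ j ∈ range N, (2 * (N : ℝ) + 3) ^ j) + 1 ≤ m)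
    (h : v + (∑ j ∈ range N, (2 * (N : ℝ) + 3) ^ j) / 2 < pickShare m k N) :
    ∃ k' : ℕ → ℕ, ∑ j ∈ range (N + 1), k' j = m ∧ ∀ j ≤ N, v < pickShare m k' j := by
  set A : ℕ := 2 * N + 3 with hA
  have hAr : (A : ℝ) = 2 * (N : ℝ) + 3 := by rw [hA]; push_cast; ring
  rw [← hAr] at hm h
  set D : ℕ → ℕ := fun i => ∑ j ∈ range i, A ^ j with hD
  have hDr : ∀ i, (D i : ℝ) = ∑ j ∈ range i, (A : ℝ) ^ j := by intro i; rw [hD]; push_cast; rfl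
  rw [← hDr] at hm h
  set δ : ℝ := 1 / (2 * ((N : ℝ) + 1)) with hδ
  have hδ0 : 0 < δ := by positivity
  have hδN : δ * (2 * ((N : ℝ) + 1)) = 1 := by rw [hδ]; field_simp
  have hgeom : ∀ i, (D i : ℝ) = δ * ((A : ℝ) ^ i - 1) := by
    intro i
    have := geom_sum_mul (A : ℝ) i
    rw [← hDr, hAr] at this
    rw [hAr, ← this]
    linear_combination -(D i : ℝ) * hδN
  have hlast := hv N le_rfl
  rw [pickShare_last hk] at hlast h
  have hroom : δ * (m + 1) ≤ k N - D N := by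
    have h1 : (m : ℝ) / (N + 1) = 2 * δ * m := by rw [hδ]; field_simp
    have h2 := mul_le_mul_of_nonneg_left hm hδ0.le
    have h3 : δ * (2 * ((N : ℝ) + 1) * (1 + D N) + 1) = 1 + D N + δ := by
      linear_combination (1 + (D N : ℝ)) * hδN
    rw [h1] at hv0
    linarith
  have hkD : D N ≤ k N := by
    have : 0 ≤ δ * ((m : ℝ) + 1) := by positivity
    have : (D N : ℝ) ≤ k N := by linarith
    exact_mod_cast this
  set k' : ℕ → ℕ := fun j => if j < N then k j + A ^ j else k N - D N with hk'
  have hpart : ∀ j ≤ N, ∑ l ∈ range j, (k' l : ℝ) = ∑ l ∈ range j, (k l : ℝ) + D j := by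
    intro j hj
    rw [hDr, ← sum_add_distrib]
    refine sum_congr rfl fun l hl => ?_
    have : l < N := (mem_range.1 hl).trans_le hj
    simp [hk', this]
  have hN : (k' N : ℝ) = k N - D N := by simp [hk', Nat.cast_sub hkD]
  have hsum : ∑ j ∈ range (N + 1), k' j = m := by
    have : (∑ j ∈ range (N + 1), (k' j : ℝ)) = m := by
      rw [sum_range_succ, hpart N le_rfl, hN, ← hk, sum_range_succ]
      push_cast
      ring
    exact_mod_cast this
  refine ⟨k', hsum, fun j hj => ?_⟩
  rcases eq_or_lt_of_le hj with rfl | hjN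
  · rw [pickShare_last hsum, hN]
    linarith
  have hkk : (k' j : ℝ) = k j + (A : ℝ) ^ j := by simp [hk', hjN]
  have hrem : (k N : ℝ) - D N ≤
      (m : ℝ) - ∑ l ∈ range j, (k l : ℝ) - D j - k j - (A : ℝ) ^ j := by
    have hle : ∑ l ∈ range (j + 1), (k' l : ℝ) ≤ ∑ l ∈ range N, (k' l : ℝ) :=
      sum_le_sum_of_subset_of_nonneg (range_mono hjN) fun _ _ _ => by positivity
    have hNle := sum_range_add_le hsum le_rfl
    rw [sum_range_succ, hpart j hj, hkk] at hle
    rw [hN] at hNle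
    linarith
  have hS : (0 : ℝ) ≤ ∑ l ∈ range j, (k l : ℝ) := by positivity
  have hDj : (0 : ℝ) ≤ D j := by positivity
  have hδm : 0 ≤ δ * ((m : ℝ) + 1) := by positivity
  have hscale : δ * ((m : ℝ) - ∑ l ∈ range j, (k l : ℝ) - D j + 1) ≤ δ * (m + 1) :=
    mul_le_mul_of_nonneg_left (by linarith) hδ0.le
  have hstep := bordaShare_add_sub (k := k j) (r := (m : ℝ) - ∑ l ∈ range j, (k l : ℝ))
    (d := (A : ℝ) ^ j) (D := D j) (δ := δ) (by positivity) (by positivity) hDj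
    (by linarith) (by linarith)
  have hvj := hv j hj
  rw [pickShare] at hvj
  rw [pickShare, hpart j hj, hkk, ← sub_sub]
  linarith [hgeom j]

end Optimization

/-- Among the picking vectors maximizing `W` there is one maximizing the last coordinate. -/
lemma exists_optimum_with_max_last (N m : ℕ) (W : (ℕ → ℕ) → ℝ)
    (hW : ∀ k k' : ℕ → ℕ, (∀ i ≤ N, k i = k' i) → W k = W k') :
    ∃ k : ℕ → ℕ, ∑ j ∈ range (N + 1), k j = m ∧
      (∀ k' : ℕ → ℕ, ∑ j ∈ range (N + 1), k' j = m → W k' ≤ W k) ∧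
      ∀ k' : ℕ → ℕ, ∑ j ∈ range (N + 1), k' j = m → W k ≤ W k' → k' N ≤ k N := by
  have hres : ∀ k : ℕ → ℕ, ∑ j ∈ range (N + 1), k j = m →
      ∃ k₀ ∈ piAntidiag (range (N + 1)) m, W k₀ = W k ∧ k₀ N = k N := by
    intro k hk
    refine ⟨fun j => if j < N + 1 then k j else 0, ?_, hW _ _ fun i hi => ?_, ?_⟩
    · rw [mem_piAntidiag]
      refine ⟨?_, fun i hi => ?_⟩
      · rw [← hk]
        exact sum_congr rfl fun j hj => if_pos (mem_range.1 hj)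
      · by_contra hcon
        simp only [mem_range] at hcon
        simp [hcon] at hi
    · simp [Nat.lt_succ_of_le hi]
    · simp
  obtain ⟨k₁, hk₁, -⟩ := exists_pickShare_ge N m
  obtain ⟨k₀, hk₀, -⟩ := hres k₁ hk₁
  obtain ⟨kmax, hkmax, hmax⟩ := exists_max_image _ W ⟨k₀, hk₀⟩
  obtain ⟨k, hk, hlast⟩ := exists_max_image
    {k ∈ piAntidiag (range (N + 1)) m | W kmax ≤ W k} (fun k => k N)
    ⟨kmax, mem_filter.2 ⟨hkmax, le_rfl⟩⟩
  rw [mem_filter] at hk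
  refine ⟨k, (mem_piAntidiag.1 hk.1).1, fun k' hk' => ?_, fun k' hk' hle => ?_⟩
  · obtain ⟨k₂, hk₂, hWk₂, -⟩ := hres k' hk'
    rw [← hWk₂]
    exact (hmax k₂ hk₂).trans hk.2
  · obtain ⟨k₂, hk₂, hWk₂, hN⟩ := hres k' hk'
    rw [← hN]
    exact hlast k₂ (mem_filter.2 ⟨hk₂, hk.2.trans (hle.trans hWk₂.ge)⟩)

end BordaPicking

/-- Fix `n ≥ 1` agents and consider the full independence model with the Borda scoring
vector `s_j = m - j + 1`.  For every `ε > 0` there is `M` such that for all `m ≥ M` there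
EXISTS a vector `k` maximizing the egalitarian welfare `min_a EU^k(a)` among the vectors of
nonnegative integers summing to `m`, whose relative spread
`(max_a EU^k(a) - min_a EU^k(a)) / (∑_a EU^k(a))` is below `ε`. -/
theorem borda_egalitarian_optima_equalize (n : ℕ) (hn : 0 < n) :
    ∀ ε : ℝ, 0 < ε → ∃ M : ℕ, ∀ m : ℕ, M ≤ m →
      ∃ k : ℕ → ℕ, (∑ i ∈ Finset.range n, k i = m) ∧
        (∀ k' : ℕ → ℕ, (∑ i ∈ Finset.range n, k' i = m) →
          (Finset.range n).inf' (Finset.nonempty_range_iff.mpr hn.ne')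
              (EUFI n m (bordaScore m) k') ≤
            (Finset.range n).inf' (Finset.nonempty_range_iff.mpr hn.ne')
              (EUFI n m (bordaScore m) k)) ∧
        ((Finset.range n).sup' (Finset.nonempty_range_iff.mpr hn.ne')
              (EUFI n m (bordaScore m) k) -
            (Finset.range n).inf' (Finset.nonempty_range_iff.mpr hn.ne')
              (EUFI n m (bordaScore m) k)) /
          (∑ i ∈ Finset.range n, EUFI n m (bordaScore m) k i) < ε := by
  obtain ⟨N, rfl⟩ : ∃ N, n = N + 1 := ⟨n - 1, by omega⟩
  intro ε hε
  set C : ℝ := ∑ j ∈ Finset.range N, (2 * (N : ℝ) + 3) ^ j with hC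
  have hC0 : 0 ≤ C := by positivity
  obtain ⟨M, hM⟩ := exists_nat_gt
    (max (2 * ((N : ℝ) + 1) * (1 + C) + 1) (((N : ℝ) + 1) * (1 + 2 * (1 + C) / ε)))
  refine ⟨M, fun m hm => ?_⟩
  have hmM : (M : ℝ) ≤ m := by exact_mod_cast hm
  have hm1 := (le_max_left _ _).trans (hM.le.trans hmM)
  have hm2 := (le_max_right _ _).trans_lt (hM.trans_le hmM)
  have hm0 : (0 : ℝ) < (m : ℝ) + 1 := by positivity
  have hne : (Finset.range (N + 1)).Nonempty := Finset.nonempty_range_iff.mpr hn.ne'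
  set share : (ℕ → ℕ) → ℝ := fun k => (Finset.range (N + 1)).inf' hne (pickShare m k) with hshare
  have hshare_le : ∀ k, ∀ i ≤ N, share k ≤ pickShare m k i := fun k i hi =>
    Finset.inf'_le _ (Finset.mem_range.2 (Nat.lt_succ_of_le hi))
  have hE : ∀ k : ℕ → ℕ, ∑ j ∈ Finset.range (N + 1), k j = m → ∀ i ∈ Finset.range (N + 1),
      EUFI (N + 1) m (bordaScore m) k i = (m + 1) * pickShare m k i :=
    fun k hk i hi => EUFI_bordaScore k hk (Finset.mem_range.1 hi)
  have hinf : ∀ k : ℕ → ℕ, ∑ j ∈ Finset.range (N + 1), k j = m →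
      (Finset.range (N + 1)).inf' hne (EUFI (N + 1) m (bordaScore m) k) =
        (m + 1) * share k := by
    intro k hk
    rw [Finset.inf'_congr hne rfl (hE k hk)]
    apply le_antisymm
    · obtain ⟨i, hi, hmin⟩ := Finset.exists_mem_eq_inf' hne (pickShare m k)
      rw [hshare]
      simp only [hmin]
      exact Finset.inf'_le (fun i => ((m : ℝ) + 1) * pickShare m k i) hi
    · refine Finset.le_inf' _ _ fun i hi => ?_
      exact mul_le_mul_of_nonneg_left (Finset.inf'_le _ hi) hm0.le
  obtain ⟨k, hk, hopt, hlast⟩ := exists_optimum_with_max_last N m share (by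
    intro k k' hkk'
    refine Finset.inf'_congr hne rfl fun i hi => ?_
    have hi' := Finset.mem_range.1 hi
    rw [pickShare, pickShare, hkk' i (by omega)]
    congr 2
    refine Finset.sum_congr rfl fun j hj => ?_
    have := Finset.mem_range.1 hj
    rw [hkk' j (by omega)])
  have hv : ((m : ℝ) / (N + 1) - 1) / 2 ≤ share k := by
    obtain ⟨k', hk', hge⟩ := exists_pickShare_ge N m
    refine le_trans (Finset.le_inf' _ _ fun i hi => ?_) (hopt k' hk')
    exact hge i (by simpa [Nat.lt_succ_iff] using hi)
  have hv1 : (1 + C) / ε < share k := by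
    refine lt_of_lt_of_le ?_ hv
    have : 1 + 2 * (1 + C) / ε < (m : ℝ) / (N + 1) := by
      rw [lt_div_iff₀ (by positivity)]
      linarith
    have h2 : 2 * (1 + C) / ε = 2 * ((1 + C) / ε) := by ring
    linarith
  have hv0 : 0 < share k := lt_of_le_of_lt (by positivity) hv1
  have hupper : ∀ i ≤ N, pickShare m k i ≤ share k + (1 + C) := by
    intro i hi
    by_contra! hcon
    rcases eq_or_lt_of_le hi with rfl | hiN
    · obtain ⟨k', hk', hlift⟩ := exists_lift hk (hshare_le k) hv hm1 (by linarith)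
      refine (hopt k' hk').not_gt ((Finset.lt_inf'_iff _).2 fun j hj => ?_)
      exact hlift j (by simpa [Nat.lt_succ_iff] using hj)
    · obtain ⟨k', hk', hge, hlt⟩ :=
        exists_transfer_to_last hk hv0.le (hshare_le k) hiN (by linarith)
      refine (hlast k' hk' (Finset.le_inf' _ _ fun j hj => ?_)).not_gt hlt
      exact hge j (by simpa [Nat.lt_succ_iff] using hj)
  refine ⟨k, hk, fun k' hk' => ?_, ?_⟩
  · rw [hinf k hk, hinf k' hk']
    exact mul_le_mul_of_nonneg_left (hopt k' hk') hm0.le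
  · have hsum : (m + 1) * share k ≤
        ∑ i ∈ Finset.range (N + 1), EUFI (N + 1) m (bordaScore m) k i := by
      rw [Finset.sum_congr rfl (hE k hk), ← Finset.mul_sum]
      refine mul_le_mul_of_nonneg_left ?_ hm0.le
      refine (hshare_le k 0 (Nat.zero_le N)).trans
        (Finset.single_le_sum (f := pickShare m k) (fun i hi => ?_) (by simp))
      exact hv0.le.trans (hshare_le k i (by simpa [Nat.lt_succ_iff] using hi))
    have hsup : (Finset.range (N + 1)).sup' hne (EUFI (N + 1) m (bordaScore m) k) ≤
        (m + 1) * (share k + (1 + C)) := by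
      refine Finset.sup'_le _ _ fun i hi => ?_
      rw [hE k hk i hi]
      exact mul_le_mul_of_nonneg_left
        (hupper i (by simpa [Nat.lt_succ_iff] using hi)) hm0.le
    have hpos : 0 < ((m : ℝ) + 1) * share k := mul_pos hm0 hv0
    rw [hinf k hk, div_lt_iff₀ (hpos.trans_le hsum)]
    rw [div_lt_iff₀ hε] at hv1
    have h1 := mul_lt_mul_of_pos_left hv1 hm0
    have h2 := mul_le_mul_of_nonneg_left hsum hε.le
    linarith
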